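/- Let F : [0,∞) → ℝ and let d be a positive integer. Then F[A] is totally non-negative for every symmetric totally non-negative d × d matrix A if and only if F is a non-negative constant, or: (a) d = 1: F(x) ≥ 0 for all x ≥ 0; (b) d = 2: F is non-negative, non-decreasing, and multiplicatively mid-convex, i.e., F(√(xy))² ≤ F(x)F(y) for all x, y ∈ [0,∞); (c) d = 3: F(x) = c·x^α for some c > 0 and some α ≥ 1; (d) d = 4: F(x) = c·x^α for some c > 0 and some α ∈ {1} ∪ [2,∞); (e) d ≥ 5: F(x) = c·x for some c > 0. The same characterization holds for functions F such that K ↦ F∘K maps symmetric TN kernels on X × X to symmetric TN kernels, where X is a totally ordered set of cardinality d (which may be infinite). -/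

import Mathlib

/-- An `m × n` real matrix is totally non-negative if all of its minors are
non-negative. -/
def IsTNMat {m n : ℕ} (A : Matrix (Fin m) (Fin n) ℝ) : Prop :=
  ∀ (k : ℕ) (r : Fin k → Fin m) (c : Fin k → Fin n),
    StrictMono r → StrictMono c → 0 ≤ (A.submatrix r c).det

/-- A kernel on linearly ordered sets is totally non-negative if all matrices
obtained by evaluating it on increasing tuples have non-negative determinant. -/
def IsTNKernel {X Y : Type*} [LinearOrder X] [LinearOrder Y] (K : X → Y → ℝ) : Prop :=
  ∀ (n : ℕ) (x : Fin n → X) (y : Fin n → Y), StrictMono x → StrictMono y →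
    0 ≤ (Matrix.of fun i j : Fin n => K (x i) (y j)).det

/-- The dichotomy of Theorem (symmetric TN preservers), according to `d`. -/
def SymmTNCond (F : ℝ → ℝ) (d : ℕ) : Prop :=
  (∃ c : ℝ, 0 ≤ c ∧ ∀ x : ℝ, 0 ≤ x → F x = c) ∨
  (d = 1 ∧ ∀ x : ℝ, 0 ≤ x → 0 ≤ F x) ∨
  (d = 2 ∧ (∀ x : ℝ, 0 ≤ x → 0 ≤ F x) ∧ MonotoneOn F (Set.Ici 0) ∧
    ∀ x y : ℝ, 0 ≤ x → 0 ≤ y → F (Real.sqrt (x * y)) ^ 2 ≤ F x * F y) ∨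
  (d = 3 ∧ ∃ c : ℝ, 0 < c ∧ ∃ α : ℝ, 1 ≤ α ∧ ∀ x : ℝ, 0 ≤ x → F x = c * x ^ α) ∨
  (d = 4 ∧ ∃ c : ℝ, 0 < c ∧ ∃ α : ℝ, (α = 1 ∨ 2 ≤ α) ∧
    ∀ x : ℝ, 0 ≤ x → F x = c * x ^ α) ∨
  (5 ≤ d ∧ ∃ c : ℝ, 0 < c ∧ ∀ x : ℝ, 0 ≤ x → F x = c * x)


theorem psd_iff_aux {n : ℕ} (M : Matrix (Fin n) (Fin n) ℝ) :
    M.PosSemidef ↔ (∀ i j, M i j = M j i) ∧ ∀ v : Fin n → ℝ, 0 ≤ ∑ i, ∑ j, v i * (M i j * v j) := by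
  rw [Matrix.posSemidef_iff_dotProduct_mulVec]
  refine and_congr ?_ ?_
  · rw [Matrix.IsHermitian]
    constructor
    · intro h i j
      have := congrFun (congrFun h i) j
      simpa using this.symm
    · intro h
      ext i j
      simpa using h j i
  · simp [dotProduct, Matrix.mulVec, Finset.mul_sum]

theorem psd_diag_aux {n : ℕ} {M : Matrix (Fin n) (Fin n) ℝ} (h : M.PosSemidef) (i j : Fin n) :
    M i j ^ 2 ≤ M i i * M j j := by
  by_cases hij : i = j
  · subst hij; nlinarith
  have h2 := (h.submatrix ![i, j]).det_nonneg
  have hs := ((psd_iff_aux M).1 h).1 i j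
  rw [Matrix.det_fin_two] at h2
  simp at h2
  rw [← hs] at h2
  nlinarith

theorem psd_two_pow (A : Matrix (Fin 2) (Fin 2) ℝ) (h : A.PosSemidef) (hn : ∀ i j, 0 ≤ A i j)
    (α : ℝ) (hα : 0 ≤ α) : (A.map (fun x => x ^ α)).PosSemidef := by
  have hs := ((psd_iff_aux A).1 h).1
  have hd := psd_diag_aux h 0 1
  rw [psd_iff_aux]
  refine ⟨fun i j => by simp [hs i j], fun v => ?_⟩
  simp only [Fin.sum_univ_two, Matrix.map_apply, hs 1 0]
  have h1 : (A 0 1 ^ α) ^ 2 ≤ A 0 0 ^ α * A 1 1 ^ α := by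
    rw [← Real.mul_rpow (hn _ _) (hn _ _), ← Real.rpow_natCast, ← Real.rpow_mul (hn _ _), mul_comm,
      Real.rpow_mul (hn _ _)]
    apply Real.rpow_le_rpow _ _ hα
    · positivity [hn 0 1]
    · simpa using hd
  have ha := Real.rpow_nonneg (hn 0 0) α
  have hb := Real.rpow_nonneg (hn 1 1) α
  generalize A 0 0 ^ α = a at *
  generalize A 1 1 ^ α = d at *
  generalize A 0 1 ^ α = b at *
  rcases ha.eq_or_lt with h0 | h0
  · subst h0
    have : b = 0 := by
      have : b ^ 2 ≤ 0 := by simpa using h1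
      exact pow_eq_zero_iff (two_ne_zero) |>.1 (le_antisymm this (sq_nonneg b))
    subst this
    nlinarith [mul_nonneg hb (sq_nonneg (v 1))]
  · have : 0 ≤ a * (v 0 * (a * v 0) + v 0 * (b * v 1) + (v 1 * (b * v 0) + v 1 * (d * v 1))) := by
      nlinarith [sq_nonneg (a * v 0 + b * v 1), mul_nonneg (sub_nonneg.2 h1) (sq_nonneg (v 1))]
    exact nonneg_of_mul_nonneg_right this h0

theorem schur_psd {n : ℕ} {A : Matrix (Fin (n+1)) (Fin (n+1)) ℝ} (h : A.PosSemidef) :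
    (A - Matrix.of fun i j => A 0 i * A 0 j / A 0 0).PosSemidef := by
  obtain ⟨hs, hq⟩ := (psd_iff_aux A).1 h
  rw [psd_iff_aux]
  refine ⟨fun i j => by simp [hs i j, mul_comm], fun v => ?_⟩
  have hd := fun j => psd_diag_aux h 0 j
  set S := ∑ j, A 0 j * v j with hS
  set t := S / A 0 0 with ht
  have key := hq (fun i => v i - if i = 0 then t else 0)
  have e : ∑ i, ∑ j, (v i - if i = 0 then t else 0) * (A i j * (v j - if j = 0 then t else 0))
      = ∑ i, ∑ j, v i * (A i j * v j) - t * S - t * S + t * t * A 0 0 := by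
    have e1 : ∀ i j, (v i - if i = 0 then t else 0) * (A i j * (v j - if j = 0 then t else 0))
       = v i * (A i j * v j) - (if i = 0 then t * (A i j * v j) else 0)
         - (if j = 0 then t * (A j i * v i) else 0)
         + (if i = 0 then (if j = 0 then t * t * A i j else 0) else 0) := by
      intro i j
      rw [hs j i]
      split_ifs <;> ring
    simp only [e1, Finset.sum_add_distrib, Finset.sum_sub_distrib]
    congr 1
    · congr 1
      · congr 1
        rw [Finset.sum_comm]
        simp [hS, Finset.mul_sum]
      · simp [hS, Finset.mul_sum]
    · simp [Finset.sum_ite_eq']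
  rw [e] at key
  have e2 : ∑ i, ∑ j, v i * ((A - Matrix.of fun i j => A 0 i * A 0 j / A 0 0) i j * v j)
      = ∑ i, ∑ j, v i * (A i j * v j) - S * S / A 0 0 := by
    rw [hS, Finset.sum_mul_sum, Finset.sum_div, ← Finset.sum_sub_distrib]
    refine Finset.sum_congr rfl fun i _ => ?_
    rw [Finset.sum_div, ← Finset.sum_sub_distrib]
    refine Finset.sum_congr rfl fun j _ => ?_
    simp; ring
  rw [e2]
  by_cases h0 : A 0 0 = 0
  · simp [h0, ht] at key ⊢; linarith
  · have : t * t * A 0 0 = S * S / A 0 0 := by rw [ht]; field_simp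
    have h3 : t * S = S * S / A 0 0 := by rw [ht]; field_simp
    linarith

theorem fitz_horn (n : ℕ) : ∀ (A : Matrix (Fin (n+2)) (Fin (n+2)) ℝ), A.PosSemidef →
    (∀ i j, 0 ≤ A i j) → ∀ α : ℝ, (n:ℝ) ≤ α → (A.map (fun x => x ^ α)).PosSemidef := by
  induction n with
  | zero => intro A h hn α hα; exact psd_two_pow A h hn α (by simpa using hα)
  | succ n ih =>
    intro A h hn α hα
    push_cast at hα
    have hα1 : 1 ≤ α := by have : (0:ℝ) ≤ n := n.cast_nonneg
                           linarith
    have hsch := schur_psd h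
    obtain ⟨hs, hq⟩ := (psd_iff_aux A).1 h
    set B : Matrix (Fin (n+1+2)) (Fin (n+1+2)) ℝ := Matrix.of fun i j => A 0 i * A 0 j / A 0 0 with hB
    have hBn : ∀ i j, 0 ≤ B i j := fun i j => div_nonneg (mul_nonneg (hn _ _) (hn _ _)) (hn _ _)
    have hBs : ∀ i j, B i j = B j i := fun i j => by simp [hB, mul_comm]
    have hBq : ∀ β : ℝ, 0 ≤ β → ∀ v : Fin (n+1+2) → ℝ, 0 ≤ ∑ i, ∑ j, v i * (B i j ^ β * v j) := by
      intro β hβ v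
      have : ∑ i, ∑ j, v i * (B i j ^ β * v j) = (∑ i, A 0 i ^ β * v i) * (∑ i, A 0 i ^ β * v i) / A 0 0 ^ β := by
        rw [Finset.sum_mul_sum, Finset.sum_div]
        refine Finset.sum_congr rfl fun i _ => ?_
        rw [Finset.sum_div]
        refine Finset.sum_congr rfl fun j _ => ?_
        rw [hB, Matrix.of_apply, Real.div_rpow (mul_nonneg (hn _ _) (hn _ _)) (hn _ _),
          Real.mul_rpow (hn _ _) (hn _ _)]
        ring
      rw [this]
      exact div_nonneg (mul_self_nonneg _) (Real.rpow_nonneg (hn _ _) _)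
    have hBpsd : B.PosSemidef := by
      rw [psd_iff_aux]
      refine ⟨hBs, fun v => ?_⟩
      simpa using hBq 1 zero_le_one v
    have hz : ∀ j, (A - B) 0 j = 0 := by
      intro j
      have := psd_diag_aux h 0 j
      by_cases h0 : A 0 0 = 0
      · rw [h0] at this
        have h5 : A 0 j = 0 := by
          have : A 0 j ^ 2 ≤ 0 := by simpa using this
          exact pow_eq_zero_iff (two_ne_zero) |>.1 (le_antisymm this (sq_nonneg _))
        simp [hB, h5]
      · simp [hB]; field_simp; simp
    have hz' : ∀ j, (A - B) j 0 = 0 := by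
      intro j
      have := hz j
      simp only [Matrix.sub_apply] at this ⊢
      rw [hs, hBs]; exact this
    rw [psd_iff_aux]
    refine ⟨fun i j => by simp [hs i j], fun v => ?_⟩
    let g : ℝ → ℝ := fun t => ∑ i, ∑ j, v i * ((B i j + t * (A - B) i j) ^ α * v j)
    have hg : ∀ t, HasDerivAt g (∑ i, ∑ j, v i * (((A - B) i j * α * (B i j + t * (A - B) i j) ^ (α - 1)) * v j)) t := by
      intro t
      refine HasDerivAt.fun_sum fun i _ => HasDerivAt.fun_sum fun j _ => ?_
      refine HasDerivAt.const_mul _ (HasDerivAt.mul_const ?_ _)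
      refine HasDerivAt.rpow_const ?_ (Or.inr hα1)
      simpa using ((hasDerivAt_id t).mul_const ((A - B) i j)).const_add (B i j)
    have hmono : MonotoneOn g (Set.Icc 0 1) := by
      refine monotoneOn_of_deriv_nonneg (convex_Icc 0 1) (fun t _ => (hg t).continuousAt.continuousWithinAt)
        (fun t _ => (hg t).differentiableAt.differentiableWithinAt) ?_
      intro t ht
      rw [interior_Icc] at ht
      rw [(hg t).deriv]
      set C : Matrix (Fin (n+1+2)) (Fin (n+1+2)) ℝ := B + t • (A - B) with hC
      have hCpsd : C.PosSemidef := hBpsd.add (hsch.smul ht.1.le)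
      have hCn : ∀ i j, 0 ≤ C i j := by
        intro i j
        have : C i j = (1 - t) * B i j + t * A i j := by simp [hC]; ring
        rw [this]
        have h1 := hBn i j
        have h2 := hn i j
        have h3 := ht.1
        have h4 := ht.2
        have := mul_nonneg (sub_nonneg.2 h4.le) h1
        positivity
      have h6 := ih (C.submatrix Fin.succ Fin.succ) (hCpsd.submatrix _) (fun i j => hCn _ _) (α - 1) (by linarith)
      have h7 := (hsch.submatrix Fin.succ).hadamard h6
      have h8 := ((psd_iff_aux _).1 h7).2 (fun i => v i.succ)
      rw [Fin.sum_univ_succ]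
      simp only [hz, zero_mul, mul_zero, Finset.sum_const_zero, zero_add]
      simp only [Fin.sum_univ_succ (n := n + 1 + 1), hz', zero_mul, mul_zero, zero_add]
      have h9 := mul_nonneg (zero_le_one.trans hα1) h8
      refine h9.trans_eq ?_
      simp only [Finset.mul_sum]
      refine Finset.sum_congr rfl fun i _ => Finset.sum_congr rfl fun j _ => ?_
      simp [Matrix.hadamard, hC]
      ring
    have h01 := hmono (Set.left_mem_Icc.2 zero_le_one) (Set.right_mem_Icc.2 zero_le_one) zero_le_one
    have hg0 : 0 ≤ g 0 := by
      simpa [g] using hBq α (by linarith) v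
    have hg1 : g 1 = ∑ i, ∑ j, v i * (A.map (fun x => x ^ α) i j * v j) := by
      simp [g]
    rw [← hg1]; linarith


theorem det_four (A : Matrix (Fin 4) (Fin 4) ℝ) : A.det =
    A 0 0 * (A.submatrix ![1,2,3] ![1,2,3]).det - A 0 1 * (A.submatrix ![1,2,3] ![0,2,3]).det
    + A 0 2 * (A.submatrix ![1,2,3] ![0,1,3]).det - A 0 3 * (A.submatrix ![1,2,3] ![0,1,2]).det := by
  rw [Matrix.det_succ_row_zero]
  simp only [Matrix.det_fin_three, Fin.sum_univ_four, Matrix.submatrix_apply]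
  simp [Fin.succAbove, Fin.lt_def]
  ring

theorem psd_of_minors (A : Matrix (Fin 4) (Fin 4) ℝ) (hs : ∀ i j, A i j = A j i)
    (h1 : ∀ i, 0 ≤ A i i) (h2 : ∀ i j, i < j → 0 ≤ (A.submatrix ![i,j] ![i,j]).det)
    (h3 : ∀ i j k, i < j → j < k → 0 ≤ (A.submatrix ![i,j,k] ![i,j,k]).det)
    (h4 : 0 ≤ A.det) : A.PosSemidef := by
  have hH : A.IsHermitian := by
    ext i j; simpa using hs j i
  rw [hH.posSemidef_iff_eigenvalues_nonneg]
  intro i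
  by_contra hneg
  simp only [Pi.zero_apply, not_le] at hneg
  set μ := hH.eigenvalues i with hμ
  have hdet : (A + (-μ) • (1 : Matrix (Fin 4) (Fin 4) ℝ)).det = 0 := by
    rw [← Matrix.exists_mulVec_eq_zero_iff]
    refine ⟨hH.eigenvectorBasis i, ?_, ?_⟩
    · intro h
      have := hH.eigenvectorBasis.orthonormal.ne_zero i
      apply this
      ext j
      exact congrFun h j
    · rw [Matrix.add_mulVec, hH.mulVec_eigenvectorBasis, Matrix.smul_mulVec, Matrix.one_mulVec, ← add_smul]
      simp [hμ]
  obtain ⟨t, ht⟩ : ∃ t, t = -μ := ⟨_, rfl⟩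
  rw [← ht] at hdet
  have htp : 0 < t := by linarith
  have key : (A + t • (1 : Matrix (Fin 4) (Fin 4) ℝ)).det = t^4 + t^3 * (A 0 0 + A 1 1 + A 2 2 + A 3 3)
     + t^2 * ((A.submatrix ![0,1] ![0,1]).det + (A.submatrix ![0,2] ![0,2]).det + (A.submatrix ![0,3] ![0,3]).det
       + (A.submatrix ![1,2] ![1,2]).det + (A.submatrix ![1,3] ![1,3]).det + (A.submatrix ![2,3] ![2,3]).det)
     + t * ((A.submatrix ![0,1,2] ![0,1,2]).det + (A.submatrix ![0,1,3] ![0,1,3]).det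
       + (A.submatrix ![0,2,3] ![0,2,3]).det + (A.submatrix ![1,2,3] ![1,2,3]).det) + A.det := by
    rw [det_four, det_four]
    simp only [Matrix.det_fin_three, Matrix.det_fin_two, Matrix.submatrix_apply]
    simp
    ring
  have a1 := h2 0 1 (by decide)
  have a2 := h2 0 2 (by decide)
  have a3 := h2 0 3 (by decide)
  have a4 := h2 1 2 (by decide)
  have a5 := h2 1 3 (by decide)
  have a6 := h2 2 3 (by decide)
  have b1 := h3 0 1 2 (by decide) (by decide)
  have b2 := h3 0 1 3 (by decide) (by decide)
  have b3 := h3 0 2 3 (by decide) (by decide)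
  have b4 := h3 1 2 3 (by decide) (by decide)
  have c1 := h1 0
  have c2 := h1 1
  have c3 := h1 2
  have c4 := h1 3
  have : 0 < (A + t • (1 : Matrix (Fin 4) (Fin 4) ℝ)).det := by
    rw [key]
    positivity
  linarith

/-- two-variable majorization for powers -/
theorem pow_major {p q r s α : ℝ} (hα : 1 ≤ α) (hs : 0 ≤ s) (hsq : s ≤ q) (hsr : s ≤ r) (hqp : q ≤ p)
    (hrp : r ≤ p) (hsum : q + r ≤ p + s) : q ^ α + r ^ α ≤ p ^ α + s ^ α := by
  have hc := convexOn_rpow hα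
  -- p' = q + r - s
  have hp' : q + r - s ≤ p := by linarith
  have h1 : (q + r - s) ^ α ≤ p ^ α := Real.rpow_le_rpow (by linarith) hp' (by linarith)
  suffices q ^ α + r ^ α ≤ (q + r - s) ^ α + s ^ α by linarith
  rcases (show s ≤ q + r - s by linarith).eq_or_lt with h | h
  · have h2 : q = s := by linarith
    have h3 : r = s := by linarith
    subst h3; rw [h2]; simp
  have hd : 0 < q + r - s - s := by linarith
  set P := q + r - s with hP
  have e1 := hc.2 (Set.mem_Ici.2 hs) (show P ∈ Set.Ici (0:ℝ) from Set.mem_Ici.2 (by linarith))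
    (show 0 ≤ (P - q) / (P - s) from div_nonneg (by linarith) hd.le) (show 0 ≤ (q - s)/(P - s) from div_nonneg (by linarith) hd.le)
    (by field_simp; ring)
  have e2 := hc.2 (Set.mem_Ici.2 hs) (show P ∈ Set.Ici (0:ℝ) from Set.mem_Ici.2 (by linarith))
    (show 0 ≤ (P - r) / (P - s) from div_nonneg (by linarith) hd.le) (show 0 ≤ (r - s)/(P - s) from div_nonneg (by linarith) hd.le)
    (by field_simp; ring)
  simp only [smul_eq_mul] at e1 e2
  have f1 : (P - q) / (P - s) * s + (q - s)/(P - s) * P = q := by field_simp; ring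
  have f2 : (P - r) / (P - s) * s + (r - s)/(P - s) * P = r := by field_simp; ring
  rw [f1] at e1
  rw [f2] at e2
  have : (P - q) / (P - s) * s ^ α + (q - s)/(P - s) * P ^ α + ((P - r) / (P - s) * s ^ α + (r - s)/(P - s) * P ^ α) = P ^ α + s ^ α := by
    field_simp
    rw [hP]; ring
  linarith

theorem ratio_mono {α : ℝ} (hα : 1 ≤ α) {x y : ℝ} (hx : 1 < x) (hxy : x ≤ y) :
    (x - 1) * x ^ (α - 1) * (y ^ α - 1) ≤ (y - 1) * y ^ (α - 1) * (x ^ α - 1) := by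
  -- slope of t^α at 1, points 1/y ≤ 1/x < 1
  have hx0 : 0 < x := by linarith
  have hy0 : 0 < y := by linarith
  have hc := convexOn_rpow hα
  have h := hc.secant_mono (a := 1) (x := y⁻¹) (y := x⁻¹) (by simp) (by simp; positivity) (by simp; positivity)
    (by rw [Ne, inv_eq_one]; linarith) (by rw [Ne, inv_eq_one]; linarith)
    (inv_anti₀ hx0 hxy)
  rw [Real.one_rpow, Real.inv_rpow hy0.le, Real.inv_rpow hx0.le] at h
  have ex : x ^ α = x * x ^ (α - 1) := by
    rw [← Real.rpow_one_add' hx0.le (by linarith)]; congr 1; ring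
  have ey : y ^ α = y * y ^ (α - 1) := by
    rw [← Real.rpow_one_add' hy0.le (by linarith)]; congr 1; ring
  have px := Real.rpow_pos_of_pos hx0 (α - 1)
  have py := Real.rpow_pos_of_pos hy0 (α - 1)
  rw [ex, ey] at h ⊢
  generalize x ^ (α - 1) = u at *
  generalize y ^ (α - 1) = w at *
  have e1 : ((y * w)⁻¹ - 1) / (y⁻¹ - 1) = (y * w - 1) / (w * (y - 1)) := by
    have : y - 1 ≠ 0 := by linarith
    have : 1 - y ≠ 0 := by intro h; linarith
    have h3 : y⁻¹ - 1 = (1 - y) / y := by field_simp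
    rw [h3]
    field_simp
    ring
  have e2 : ((x * u)⁻¹ - 1) / (x⁻¹ - 1) = (x * u - 1) / (u * (x - 1)) := by
    have : x - 1 ≠ 0 := by linarith
    have : 1 - x ≠ 0 := by intro h; linarith
    have h3 : x⁻¹ - 1 = (1 - x) / x := by field_simp
    rw [h3]
    field_simp
    ring
  rw [e1, e2, div_le_div_iff₀ (mul_pos py (by linarith)) (mul_pos px (by linarith))] at h
  linarith

theorem ratio_monoOn {α l : ℝ} (hα : 1 ≤ α) (hl : 1 ≤ l) :
    MonotoneOn (fun s : ℝ => ((1 + l * s) ^ α - 1) / ((1 + s) ^ α - 1)) (Set.Ioi 0) := by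
  have hden : ∀ s : ℝ, 0 < s → 0 < (1 + s) ^ α - 1 := fun s hs => by
    have := Real.one_lt_rpow (show 1 < 1 + s by linarith) (show 0 < α by linarith)
    linarith
  have hd : ∀ s : ℝ, 0 < s → HasDerivAt (fun s : ℝ => ((1 + l * s) ^ α - 1) / ((1 + s) ^ α - 1))
      (((l * α * (1 + l * s) ^ (α - 1)) * ((1 + s) ^ α - 1)
        - ((1 + l * s) ^ α - 1) * (1 * α * (1 + s) ^ (α - 1))) / ((1 + s) ^ α - 1) ^ 2) s := by
    intro s hs
    refine HasDerivAt.fun_div ?_ ?_ (hden s hs).ne'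
    · refine HasDerivAt.sub_const _ (HasDerivAt.rpow_const ?_ (Or.inr hα))
      simpa using ((hasDerivAt_id s).const_mul l).const_add 1
    · refine HasDerivAt.sub_const _ (HasDerivAt.rpow_const ?_ (Or.inr hα))
      simpa using (hasDerivAt_id s).const_add 1
  refine monotoneOn_of_deriv_nonneg (convex_Ioi 0) (fun t ht => (hd t ht).continuousAt.continuousWithinAt)
        (fun t ht => (hd t (by simpa using ht)).differentiableAt.differentiableWithinAt) ?_
  intro s hs
  rw [interior_Ioi] at hs
  have hs : 0 < s := hs
  rw [(hd s hs).deriv]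
  have := ratio_mono hα (x := 1 + s) (y := 1 + l * s) (by linarith) (by nlinarith)
  have h2 : 0 ≤ s * (l * (1 + l * s) ^ (α - 1) * ((1 + s) ^ α - 1)
     - ((1 + l * s) ^ α - 1) * (1 + s) ^ (α - 1)) := by nlinarith
  have h3 := nonneg_of_mul_nonneg_right h2 hs
  apply div_nonneg _ (sq_nonneg _)
  nlinarith

theorem four_lemma {α a b c d : ℝ} (hα : 1 ≤ α) (ha : 1 ≤ a) (hab : a ≤ b) (hac : a ≤ c) (hbd : b ≤ d)
    (h : (b - 1) * (c - 1) ≤ (a - 1) * (d - 1)) :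
    (b ^ α - 1) * (c ^ α - 1) ≤ (a ^ α - 1) * (d ^ α - 1) := by
  rcases ha.eq_or_lt with h1 | h1
  · subst h1
    have : (b - 1) * (c - 1) = 0 :=
      le_antisymm (by simpa using h) (mul_nonneg (by linarith) (by linarith))
    rcases mul_eq_zero.1 this with h2 | h2
    · have : b = 1 := by linarith
      simp [this]
    · have : c = 1 := by linarith
      simp [this]
  · have ha1 : 0 < a - 1 := by linarith
    have hc1 : 0 < c - 1 := by linarith
    have hl : 1 ≤ (b - 1) / (a - 1) := by rw [le_div_iff₀ ha1]; linarith
    have hm := ratio_monoOn hα hl (show a - 1 ∈ Set.Ioi 0 from ha1) (show c - 1 ∈ Set.Ioi 0 from hc1) (by linarith)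
    have e1 : 1 + (b - 1) / (a - 1) * (a - 1) = b := by field_simp; ring
    have e2 : 1 + (a - 1) = a := by ring
    have e3 : 1 + (c - 1) = c := by ring
    simp only [e1, e2, e3] at hm
    have hden : ∀ s : ℝ, 1 < s → 0 < s ^ α - 1 := fun s hs => by
      have := Real.one_lt_rpow hs (show 0 < α by linarith)
      linarith
    rw [div_le_div_iff₀ (hden a h1) (hden c (by linarith))] at hm
    have hle : 1 + (b - 1) / (a - 1) * (c - 1) ≤ d := by
      rw [div_mul_eq_mul_div, ← le_sub_iff_add_le', div_le_iff₀ ha1]; linarith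
    have h0 : 0 ≤ (b - 1) / (a - 1) * (c - 1) := mul_nonneg (by linarith) hc1.le
    have := Real.rpow_le_rpow (by linarith) hle (show 0 ≤ α by linarith)
    have h5 := hden a h1
    nlinarith

theorem six_lemma {α p1 p2 p3 n1 n2 n3 : ℝ} (hα : 1 ≤ α) (h0 : 0 ≤ n1) (h12 : n1 ≤ p2) (h13 : n1 ≤ p3)
    (h22 : p2 ≤ n2) (h23 : p2 ≤ n3) (h32 : p3 ≤ n2) (h33 : p3 ≤ n3) (hn2 : n2 ≤ p1) (hn3 : n3 ≤ p1)
    (hprod : p1 * p2 * p3 = n1 * n2 * n3) (hsum : n1 + n2 + n3 ≤ p1 + p2 + p3) :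
    n1 ^ α + n2 ^ α + n3 ^ α ≤ p1 ^ α + p2 ^ α + p3 ^ α := by
  have hα0 : α ≠ 0 := by linarith
  rcases h0.eq_or_lt with h1 | h1
  · subst h1
    have hz : p1 * p2 * p3 = 0 := by rw [hprod]; ring
    rw [Real.zero_rpow hα0]
    rcases mul_eq_zero.1 hz with hz | hz
    · rcases mul_eq_zero.1 hz with hz | hz
      · have : n2 = 0 := by linarith
        have : n3 = 0 := by linarith
        have : p2 = 0 := by linarith
        have : p3 = 0 := by linarith
        subst_vars
        simp [Real.zero_rpow hα0]
      · subst hz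
        rw [Real.zero_rpow hα0]
        have := pow_major hα (p := p1) (q := n2) (r := n3) (s := p3) h13 h32 h33 hn2 hn3 (by linarith)
        linarith
    · subst hz
      rw [Real.zero_rpow hα0]
      have := pow_major hα (p := p1) (q := n2) (r := n3) (s := p2) h12 h22 h23 hn2 hn3 (by linarith)
      linarith
  · have hp2 : 0 < p2 := by linarith
    have hp3 : 0 < p3 := by linarith
    have hN2 : 0 < n2 := by linarith
    have hp1 : 0 < p1 := by linarith
    obtain ⟨t, ht⟩ : ∃ t, t = n1 * n2 / p1 := ⟨_, rfl⟩
    obtain ⟨a, ea⟩ : ∃ a, a = p1 / n2 := ⟨_, rfl⟩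
    obtain ⟨d, ed⟩ : ∃ d, d = p1 / n1 := ⟨_, rfl⟩
    obtain ⟨b, eb⟩ : ∃ b, b = p2 * p1 / (n1 * n2) := ⟨_, rfl⟩
    obtain ⟨c, ec⟩ : ∃ c, c = p3 * p1 / (n1 * n2) := ⟨_, rfl⟩
    have htp : 0 < t := by rw [ht]; positivity
    have q1 : p1 = a * d * t := by rw [ht, ea, ed]; field_simp
    have q2 : p2 = b * t := by rw [ht, eb]; field_simp
    have q3 : p3 = c * t := by rw [ht, ec]; field_simp
    have m1 : n1 = a * t := by rw [ht, ea]; field_simp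
    have m2 : n2 = d * t := by rw [ht, ed]; field_simp
    have m3 : n3 = b * c * t := by
      rw [ht, eb, ec]; field_simp; linarith
    have a0 : 0 < a := by rw [ea]; positivity
    have b0 : 0 < b := by rw [eb]; positivity
    have c0 : 0 < c := by rw [ec]; positivity
    have d0 : 0 < d := by rw [ed]; positivity
    have ha : 1 ≤ a := by rw [ea, le_div_iff₀ hN2]; linarith
    clear ht ea ed eb ec
    subst q1 q2 q3 m1 m2 m3
    have k1 : a ≤ b := le_of_mul_le_mul_right h12 htp
    have k2 : a ≤ c := le_of_mul_le_mul_right h13 htp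
    have k3 : b ≤ d := le_of_mul_le_mul_right h22 htp
    have k4 : (b - 1) * (c - 1) ≤ (a - 1) * (d - 1) := by
      have : (b * c + a + d) * t ≤ (a * d + b + c) * t := by linarith
      have := le_of_mul_le_mul_right this htp
      nlinarith
    have k := four_lemma hα ha k1 k2 k3 k4
    have tp := Real.rpow_pos_of_pos htp α
    rw [Real.mul_rpow a0.le htp.le, Real.mul_rpow d0.le htp.le, Real.mul_rpow (by positivity) htp.le,
      Real.mul_rpow (by positivity) htp.le, Real.mul_rpow b0.le htp.le, Real.mul_rpow c0.le htp.le,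
      Real.mul_rpow b0.le c0.le, Real.mul_rpow a0.le d0.le]
    nlinarith

section TaylorPart
open Filter Topology

theorem choose_real (a : ℝ) : Ring.choose a 0 = 1 ∧ Ring.choose a 1 = a ∧ Ring.choose a 2 = a*(a-1)/2 ∧
   Ring.choose a 3 = a*(a-1)*(a-2)/6 := by
  have h2 : Polynomial.smeval (2 : Polynomial ℤ) a = 2 := by
    rw [show (2 : Polynomial ℤ) = ((2 : ℕ) : Polynomial ℤ) from rfl, Polynomial.smeval_natCast]
    simp
  refine ⟨by simp, by simp, ?_, ?_⟩
  · rw [Ring.choose_eq_smul]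
    simp [descPochhammer_succ_right, Nat.factorial, Polynomial.smeval_mul, Polynomial.smeval_sub, Polynomial.smeval_X,
      Polynomial.smeval_one]
    ring
  · rw [Ring.choose_eq_smul]
    simp [descPochhammer_succ_right, Nat.factorial, Polynomial.smeval_mul, Polynomial.smeval_sub, Polynomial.smeval_X,
      Polynomial.smeval_one, h2]
    ring

theorem taylor3 (α k : ℝ) : Tendsto (fun e : ℝ => ((1 + k * e) ^ α - (1 + α * (k * e) + α*(α-1)/2 * (k * e)^2
    + α*(α-1)*(α-2)/6 * (k * e)^3)) / e ^ 3) (𝓝[>] 0) (𝓝 0) := by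
  have h := (Real.one_add_rpow_hasFPowerSeriesAt_zero (a := α)).isBigO_sub_partialSum_pow 4
  have hk : Tendsto (fun e : ℝ => k * e) (𝓝[>] 0) (𝓝 0) := by
    have : Tendsto (fun e : ℝ => k * e) (𝓝 0) (𝓝 (k * 0)) := (continuous_const.mul continuous_id).tendsto 0
    rw [mul_zero] at this
    exact this.mono_left nhdsWithin_le_nhds
  have h1 := h.comp_tendsto hk
  have h2 : (fun e : ℝ => (1 + k * e) ^ α - (1 + α * (k * e) + α*(α-1)/2 * (k * e)^2
    + α*(α-1)*(α-2)/6 * (k * e)^3)) =O[𝓝[>] 0] (fun e : ℝ => e ^ 4) := by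
    refine (h1.trans ?_).congr_left ?_
    · refine Asymptotics.IsBigO.of_bound (|k| ^ 4) (Eventually.of_forall fun e => ?_)
      simp [mul_pow]
    · intro e
      obtain ⟨c0, c1, c2, c3⟩ := choose_real α
      simp [FormalMultilinearSeries.partialSum, Finset.sum_range_succ, binomialSeries, FormalMultilinearSeries.coeff_ofScalars, c0, c1, c2, c3]
      ring
  have h3 : (fun e : ℝ => e ^ 4) =o[𝓝[>] 0] (fun e : ℝ => e ^ 3) :=
    (Asymptotics.isLittleO_pow_pow (by norm_num)).mono nhdsWithin_le_nhds
  exact (h2.trans_isLittleO h3).tendsto_div_nhds_zero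

theorem taylor2 (α k : ℝ) : Tendsto (fun e : ℝ => ((1 + k * e) ^ α - 1 - α * (k * e)) / e ^ 2)
    (𝓝[>] 0) (𝓝 (α*(α-1)/2 * k^2)) := by
  have h := taylor3 α k
  have hid : Tendsto (fun e : ℝ => e) (𝓝[>] 0) (𝓝 0) := tendsto_id.mono_left nhdsWithin_le_nhds
  have h1 := ((h.mul hid).add_const (α*(α-1)/2 * k^2)).add (hid.const_mul (α*(α-1)*(α-2)/6 * k^3))
  simp only [mul_zero, zero_add, add_zero] at h1
  refine h1.congr' ?_
  filter_upwards [self_mem_nhdsWithin] with e he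
  have : e ≠ 0 := ne_of_gt he
  field_simp
  ring

/-- the fifth order example -/
theorem det_neg5 (α : ℝ) (hα : 1 < α) : ∀ᶠ e : ℝ in 𝓝[>] 0, ∀ f : ℝ → ℝ, (∀ t, f t = (1 + t * e) ^ α) →
    (f 2 - 1) * ((f 6 - 1) * (f 14 - 1) - (f 8 - 1) * (f 10 - 1))
    - (f 3 - 1) * ((f 4 - 1) * (f 14 - 1) - (f 8 - 1) * (f 6 - 1))
    + (f 4 - 1) * ((f 4 - 1) * (f 10 - 1) - (f 6 - 1) * (f 6 - 1)) < 0 := by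
  set β := α*(α-1)/2 with hβ
  have hβ0 : 0 < β := by have : 0 < α - 1 := by linarith
                         positivity
  let s : ℝ → ℝ → ℝ := fun k e => ((1 + k * e) ^ α - 1 - α * (k * e)) / e ^ 2
  have hs : ∀ k, Tendsto (s k) (𝓝[>] 0) (𝓝 (β * k^2)) := fun k => taylor2 α k
  have hid : Tendsto (fun e : ℝ => e) (𝓝[>] 0) (𝓝 0) := tendsto_id.mono_left nhdsWithin_le_nhds
  -- entries (f t - 1)/e = α t + e s_t ; limit of det / e^4
  let G : ℝ → ℝ := fun e =>
    α^2 * (4 * s 2 e - 8 * s 3 e + 4 * s 4 e - 2 * s 4 e + 4 * s 6 e - 2 * s 8 e)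
    + e * (α * (2 * (s 6 e * s 14 e - s 8 e * s 10 e) + s 2 e * (6 * s 14 e + 14 * s 6 e - 8 * s 10 e - 10 * s 8 e)
      - 3 * (s 4 e * s 14 e - s 8 e * s 6 e) - s 3 e * (4 * s 14 e + 14 * s 4 e - 8 * s 6 e - 6 * s 8 e)
      + 4 * (s 4 e * s 10 e - s 6 e * s 6 e) + s 4 e * (4 * s 10 e + 10 * s 4 e - 12 * s 6 e)))
    + e ^ 2 * (s 2 e * (s 6 e * s 14 e - s 8 e * s 10 e) - s 3 e * (s 4 e * s 14 e - s 8 e * s 6 e)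
      + s 4 e * (s 4 e * s 10 e - s 6 e * s 6 e))
  have hG : Tendsto G (𝓝[>] 0) (𝓝 (α^2 * (-8 * β))) := by
    have t2 := hs 2
    have t3 := hs 3
    have t4 := hs 4
    have t6 := hs 6
    have t8 := hs 8
    have t10 := hs 10
    have t14 := hs 14
    have hc : Continuous (fun z : ℝ × ℝ × ℝ × ℝ × ℝ × ℝ × ℝ × ℝ => match z with
      | (e, s2, s3, s4, s6, s8, s10, s14) =>  α^2 * (4 * s2 - 8 * s3 + 4 * s4 - 2 * s4 + 4 * s6 - 2 * s8)
        + e * (α * (2 * (s6 * s14 - s8 * s10) + s2 * (6 * s14 + 14 * s6 - 8 * s10 - 10 * s8)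
          - 3 * (s4 * s14 - s8 * s6) - s3 * (4 * s14 + 14 * s4 - 8 * s6 - 6 * s8)
          + 4 * (s4 * s10 - s6 * s6) + s4 * (4 * s10 + 10 * s4 - 12 * s6)))
        + e ^ 2 * (s2 * (s6 * s14 - s8 * s10) - s3 * (s4 * s14 - s8 * s6)
          + s4 * (s4 * s10 - s6 * s6))) := by fun_prop
    have := (hc.tendsto (0, β * 2^2, β * 3^2, β * 4^2, β * 6^2, β * 8^2, β * 10^2, β * 14^2)).comp
      (hid.prodMk_nhds (t2.prodMk_nhds (t3.prodMk_nhds (t4.prodMk_nhds (t6.prodMk_nhds (t8.prodMk_nhds (t10.prodMk_nhds t14)))))))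
    convert this using 2
    · rfl
    · dsimp only
      ring
  have hneg : α^2 * (-8 * β) < 0 := by have : 0 < α^2 * β := by positivity
                                       linarith
  filter_upwards [hG.eventually_lt_const hneg, self_mem_nhdsWithin] with e he he0 f hf
  have he0 : 0 < e := he0
  have hfs : ∀ k, f k - 1 = α * k * e + e ^ 2 * s k e := by
    intro k
    rw [hf]
    simp only [s]
    field_simp
    ring
  simp only [hfs]
  have : e ^ 4 * G e < 0 := mul_neg_of_pos_of_neg (by positivity) he
  refine lt_of_eq_of_lt ?_ this
  simp only [G]
  ring

theorem quad_neg4 (α : ℝ) (h1 : 1 < α) (h2 : α < 2) : ∀ᶠ e : ℝ in 𝓝[>] 0,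
    ∑ i : Fin 4, ∑ j : Fin 4, (![1, -3, 3, -1] : Fin 4 → ℝ) i *
      ((1 + ((i : ℕ) * (j : ℕ) : ℝ) * e) ^ α * (![1, -3, 3, -1] : Fin 4 → ℝ) j) < 0 := by
  set c3 := α*(α-1)*(α-2)/6 with hc3
  have hc : c3 < 0 := by
    have : 0 < α * (α - 1) * (2 - α) := by
      have : 0 < α - 1 := by linarith
      have : 0 < 2 - α := by linarith
      positivity
    rw [hc3]; linarith
  let v : Fin 4 → ℝ := ![1, -3, 3, -1]
  let R : ℝ → ℝ → ℝ := fun k e => ((1 + k * e) ^ α - (1 + α * (k * e) + α*(α-1)/2 * (k * e)^2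
    + c3 * (k * e)^3)) / e ^ 3
  have hR : Tendsto (fun e => 36 * c3 + ∑ i : Fin 4, ∑ j : Fin 4, v i * (R ((i : ℕ) * (j : ℕ) : ℝ) e * v j))
     (𝓝[>] 0) (𝓝 (36 * c3 + ∑ i : Fin 4, ∑ j : Fin 4, v i * (0 * v j))) := by
    refine Tendsto.const_add _ (tendsto_finsetSum _ fun i _ => tendsto_finsetSum _ fun j _ => ?_)
    exact ((taylor3 α _).mul_const _).const_mul _
  simp only [zero_mul, mul_zero, Finset.sum_const_zero, add_zero] at hR
  filter_upwards [hR.eventually_lt_const (show 36 * c3 < 0 by linarith), self_mem_nhdsWithin] with e he he0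
  have he0 : 0 < e := he0
  have hf : ∀ k, (1 + k * e) ^ α = e ^ 3 * R k e + (1 + α * (k * e) + α*(α-1)/2 * (k * e)^2
    + c3 * (k * e)^3) := by
    intro k
    simp only [R]
    field_simp
    ring
  simp only [hf]
  have := mul_neg_of_pos_of_neg (pow_pos he0 3) he
  refine lt_of_eq_of_lt ?_ this
  simp [Fin.sum_univ_four, v]
  ring

end TaylorPart


/-- Preservers of symmetric TN kernels. -/
def Pres (X : Type) [LinearOrder X] (F : ℝ → ℝ) : Prop :=
  ∀ K : X → X → ℝ, (∀ a b, K a b = K b a) → IsTNKernel K → IsTNKernel fun a b => F (K a b)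

theorem pres_mat_iff (d : ℕ) (F : ℝ → ℝ) :
    (∀ A : Matrix (Fin d) (Fin d) ℝ, A.IsSymm → IsTNMat A → IsTNMat (A.map F)) ↔ Pres (Fin d) F := by
  constructor
  · intro h K hs hK
    exact h (Matrix.of K) (by ext i j; exact hs j i) hK
  · intro h A hs hA
    exact h (fun i j => A i j) (fun i j => (congrFun (congrFun hs i) j).symm) hA

theorem tn_sub {X Y X' Y' : Type*} [LinearOrder X] [LinearOrder Y] [LinearOrder X'] [LinearOrder Y']
    {K : X → Y → ℝ} (hK : IsTNKernel K)
    {f : X' → X} {g : Y' → Y} (hf : StrictMono f) (hg : StrictMono g) :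
    IsTNKernel fun a b => K (f a) (g b) :=
  fun n x y hx hy => hK n (f ∘ x) (g ∘ y) (hf.comp hx) (hg.comp hy)

theorem pres_embed {X Y : Type} [LinearOrder X] [LinearOrder Y] (e : Y → X) (he : StrictMono e) (F : ℝ → ℝ)
    (h : Pres X F) : Pres Y F := by
  classical
  intro K hs hK
  rcases isEmpty_or_nonempty Y with hY | hY
  · intro n x y hx hy
    rcases n with _ | n
    · simp
    · exact hY.elim (x 0)
  let K' : X → X → ℝ := fun a b => if a ∈ Set.range e ∧ b ∈ Set.range e then
    K (Function.invFun e a) (Function.invFun e b) else 0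
  have hK'e : ∀ a b, K' (e a) (e b) = K a b := by
    intro a b
    simp [K', Function.leftInverse_invFun he.injective _]
  have hs' : ∀ a b, K' a b = K' b a := by
    intro a b
    simp only [K', and_comm (a := a ∈ Set.range e), hs (Function.invFun e a)]
  have hK' : IsTNKernel K' := by
    intro n x y hx hy
    by_cases h1 : ∀ i, x i ∈ Set.range e
    · by_cases h2 : ∀ i, y i ∈ Set.range e
      · choose r hr using h1
        choose c hc using h2
        have := hK n r c (fun i j hij => he.lt_iff_lt.1 (by rw [hr, hr]; exact hx hij))
          (fun i j hij => he.lt_iff_lt.1 (by rw [hc, hc]; exact hy hij))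
        simpa only [← hr, ← hc, hK'e] using this
      · push Not at h2
        obtain ⟨j, hj⟩ := h2
        refine (Matrix.det_eq_zero_of_column_eq_zero j fun i => ?_).ge
        simp only [Matrix.of_apply, K']
        exact if_neg fun h => hj h.2
    · push Not at h1
      obtain ⟨j, hj⟩ := h1
      refine (Matrix.det_eq_zero_of_row_eq_zero j fun i => ?_).ge
      simp only [Matrix.of_apply, K']
      exact if_neg fun h => hj h.1
  have := tn_sub (h K' hs' hK') he he
  simpa only [hK'e] using this

theorem tn_nonneg {X Y : Type*} [LinearOrder X] [LinearOrder Y] {K : X → Y → ℝ} (hK : IsTNKernel K)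
    (a : X) (b : Y) : 0 ≤ K a b := by
  have := hK 1 (fun _ => a) (fun _ => b) (Subsingleton.strictMono _) (Subsingleton.strictMono _)
  simpa using this

theorem strictMono_two {X : Type*} [LinearOrder X] {a b : X} (h : a < b) : StrictMono ![a, b] := by
  intro i j hij
  fin_cases i <;> fin_cases j <;> simp_all

theorem strictMono_three {X : Type*} [LinearOrder X] {a b c : X} (h : a < b) (h' : b < c) :
    StrictMono ![a, b, c] := by
  intro i j hij
  have := h.trans h'
  fin_cases i <;> fin_cases j <;> simp_all

theorem tn_two {X Y : Type*} [LinearOrder X] [LinearOrder Y] {K : X → Y → ℝ} (hK : IsTNKernel K)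
    {a a' : X} {b b' : Y} (ha : a < a') (hb : b < b') : K a b' * K a' b ≤ K a b * K a' b' := by
  have := hK 2 ![a, a'] ![b, b'] (strictMono_two ha) (strictMono_two hb)
  rw [Matrix.det_fin_two] at this
  simpa using this

theorem tn_of_dets {X Y : Type*} [LinearOrder X] [LinearOrder Y] {K : X → Y → ℝ}
    (h1 : ∀ a b, 0 ≤ K a b)
    (h2 : ∀ a a' b b', a < a' → b < b' → K a b' * K a' b ≤ K a b * K a' b')
    (h3 : ∀ n, 3 ≤ n → ∀ (x : Fin n → X) (y : Fin n → Y), StrictMono x → StrictMono y →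
      0 ≤ (Matrix.of fun i j : Fin n => K (x i) (y j)).det) : IsTNKernel K := by
  intro n x y hx hy
  rcases n with _ | _ | _ | n
  · simp
  · simpa using h1 _ _
  · rw [Matrix.det_fin_two]
    simpa using h2 _ _ _ _ (hx (show (0 : Fin 2) < 1 by decide)) (hy (show (0 : Fin 2) < 1 by decide))
  · exact h3 _ (by omega) x y hx hy

/-- Gram kernels with three totally non-negative columns are TN. -/
theorem tn_gram {X : Type*} [LinearOrder X] (p q r : X → ℝ) (hp : ∀ i, 0 ≤ p i) (hq : ∀ i, 0 ≤ q i)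
    (hr : ∀ i, 0 ≤ r i) (hpq : ∀ i j, i < j → p j * q i ≤ p i * q j)
    (hpr : ∀ i j, i < j → p j * r i ≤ p i * r j) (hqr : ∀ i j, i < j → q j * r i ≤ q i * r j)
    (hpqr : ∀ i j k, i < j → j < k →
      0 ≤ p i * (q j * r k - q k * r j) - p j * (q i * r k - q k * r i) + p k * (q i * r j - q j * r i)) :
    IsTNKernel fun i j => p i * p j + q i * q j + r i * r j := by
  apply tn_of_dets
  · intro a b
    have := hp a; have := hp b; have := hq a; have := hq b; have := hr a; have := hr b
    positivity
  · intro a a' b b' ha hb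
    have h1 := mul_nonneg (sub_nonneg.2 (hpq a a' ha)) (sub_nonneg.2 (hpq b b' hb))
    have h2 := mul_nonneg (sub_nonneg.2 (hpr a a' ha)) (sub_nonneg.2 (hpr b b' hb))
    have h3 := mul_nonneg (sub_nonneg.2 (hqr a a' ha)) (sub_nonneg.2 (hqr b b' hb))
    nlinarith
  · intro n hn x y hx hy
    rcases hn.eq_or_lt with h | h
    · subst h
      have hx1 := hpqr _ _ _ (hx (show (0 : Fin 3) < 1 by decide)) (hx (show (1 : Fin 3) < 2 by decide))
      have hy1 := hpqr _ _ _ (hy (show (0 : Fin 3) < 1 by decide)) (hy (show (1 : Fin 3) < 2 by decide))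
      refine (mul_nonneg hx1 hy1).trans_eq ?_
      rw [Matrix.det_fin_three]
      simp only [Matrix.of_apply]
      ring
    · let W : (Fin n → X) → Matrix (Fin n) (Fin 3) ℝ := fun x => Matrix.of fun i => ![p (x i), q (x i), r (x i)]
      have e : (Matrix.of fun i j : Fin n => p (x i) * p (y j) + q (x i) * q (y j) + r (x i) * r (y j))
          = W x * (W y).transpose := by
        ext i j
        simp [W, Matrix.mul_apply, Fin.sum_univ_three]
      by_contra hne
      have hu : IsUnit (W x * (W y).transpose).det := by
        rw [← e]
        exact isUnit_iff_ne_zero.2 (by intro h0; rw [h0] at hne; simp at hne)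
      have h1 := Matrix.rank_of_isUnit _ ((Matrix.isUnit_iff_isUnit_det _).2 hu)
      have h2 := (Matrix.rank_mul_le_left (W x) (W y).transpose).trans (Matrix.rank_le_width _)
      rw [h1] at h2
      simp at h2
      omega

theorem tn_const {X Y : Type*} [LinearOrder X] [LinearOrder Y] (c : ℝ) (hc : 0 ≤ c) :
    IsTNKernel fun (_ : X) (_ : Y) => c := by
  apply tn_of_dets
  · intro _ _; exact hc
  · intros; exact le_rfl
  · intro n hn x y _ _
    refine (Matrix.det_zero_of_row_eq (i := (⟨0, by omega⟩ : Fin n)) (j := (⟨1, by omega⟩ : Fin n)) (by simp) ?_).ge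
    rfl

theorem pres_const {X : Type} [LinearOrder X] {F : ℝ → ℝ} {c : ℝ} (hc : 0 ≤ c)
    (h : ∀ x : ℝ, 0 ≤ x → F x = c) : Pres X F := by
  intro K _ hK
  have : (fun a b => F (K a b)) = fun _ _ => c := by
    ext a b; exact h _ (tn_nonneg hK a b)
  rw [this]
  exact tn_const c hc

theorem tn_smul {X Y : Type*} [LinearOrder X] [LinearOrder Y] {K : X → Y → ℝ} (hK : IsTNKernel K)
    (c : ℝ) (hc : 0 ≤ c) : IsTNKernel fun a b => c * K a b := by
  intro n x y hx hy
  have : (Matrix.of fun i j : Fin n => c * K (x i) (y j)) = c • (Matrix.of fun i j : Fin n => K (x i) (y j)) := by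
    ext i j; simp
  rw [this, Matrix.det_smul]
  exact mul_nonneg (pow_nonneg hc _) (hK n x y hx hy)

theorem pres_lin {X : Type} [LinearOrder X] {F : ℝ → ℝ} {c : ℝ} (hc : 0 ≤ c)
    (h : ∀ x : ℝ, 0 ≤ x → F x = c * x) : Pres X F := by
  intro K _ hK
  have : (fun a b => F (K a b)) = fun a b => c * K a b := by
    ext a b; exact h _ (tn_nonneg hK a b)
  rw [this]
  exact tn_smul hK c hc

theorem pres_pow {X : Type} [LinearOrder X] {F : ℝ → ℝ} {c α : ℝ} (hc : 0 ≤ c)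
    (h : ∀ x : ℝ, 0 ≤ x → F x = c * x ^ α) (hp : Pres X fun x => x ^ α) : Pres X F := by
  intro K hs hK
  have : (fun a b => F (K a b)) = fun a b => c * K a b ^ α := by
    ext a b; exact h _ (tn_nonneg hK a b)
  rw [this]
  exact tn_smul (hp K hs hK) c hc

theorem fin_le {n d : ℕ} {x : Fin n → Fin d} (hx : StrictMono x) : n ≤ d := by
  simpa using Fintype.card_le_of_injective x hx.injective

theorem fin_id {d : ℕ} {x : Fin d → Fin d} (hx : StrictMono x) : x = id := by
  exact (StrictMono.range_inj hx strictMono_id).1 (by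
    rw [Set.range_id]
    exact (Finite.injective_iff_surjective.1 hx.injective).range_eq)

theorem two_of {K : Fin 2 → Fin 2 → ℝ} (hs : K 0 1 = K 1 0) (h1 : ∀ a b, 0 ≤ K a b)
    (h2 : K 0 1 ^ 2 ≤ K 0 0 * K 1 1) : IsTNKernel K := by
  apply tn_of_dets h1
  · intro a a' b b' ha hb
    have : a = 0 ∧ a' = 1 ∧ b = 0 ∧ b' = 1 := by omega
    obtain ⟨rfl, rfl, rfl, rfl⟩ := this
    rw [← hs]; linarith
  · intro n hn x y hx hy
    have := fin_le hx
    omega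

theorem pres_two {F : ℝ → ℝ} (h0 : ∀ x : ℝ, 0 ≤ x → 0 ≤ F x) (hm : MonotoneOn F (Set.Ici 0))
    (hc : ∀ x y : ℝ, 0 ≤ x → 0 ≤ y → F (Real.sqrt (x * y)) ^ 2 ≤ F x * F y) : Pres (Fin 2) F := by
  intro K hs hK
  have hn := tn_nonneg hK
  apply two_of (by rw [hs]) (fun a b => h0 _ (hn a b))
  refine le_trans ?_ (hc _ _ (hn 0 0) (hn 1 1))
  apply pow_le_pow_left₀ (h0 _ (hn _ _))
  apply hm (hn _ _) (Real.sqrt_nonneg _)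
  apply Real.le_sqrt_of_sq_le
  have := tn_two hK (show (0 : Fin 2) < 1 by decide) (show (0 : Fin 2) < 1 by decide)
  rw [hs 1 0] at this
  linarith

theorem tn_pow_three {X Y : Type*} [LinearOrder X] [LinearOrder Y] {K : X → Y → ℝ} (hK : IsTNKernel K)
    {α : ℝ} (hα : 1 ≤ α)
    (h4 : ∀ n, 4 ≤ n → ∀ (x : Fin n → X) (y : Fin n → Y), StrictMono x → StrictMono y →
      0 ≤ (Matrix.of fun i j : Fin n => K (x i) (y j) ^ α).det) : IsTNKernel fun a b => K a b ^ α := by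
  have hn := tn_nonneg hK
  have hα0 : 0 ≤ α := by linarith
  apply tn_of_dets
  · intro a b; exact Real.rpow_nonneg (hn a b) _
  · intro a a' b b' ha hb
    rw [← Real.mul_rpow (hn _ _) (hn _ _), ← Real.mul_rpow (hn _ _) (hn _ _)]
    exact Real.rpow_le_rpow (mul_nonneg (hn _ _) (hn _ _)) (tn_two hK ha hb) hα0
  · intro n h3 x y hx hy
    rcases h3.eq_or_lt with h | h
    · subst h
      have hd := hK 3 x y hx hy
      rw [Matrix.det_fin_three] at hd ⊢
      simp only [Matrix.of_apply] at hd ⊢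
      have x01 := hx (show (0 : Fin 3) < 1 by decide)
      have x12 := hx (show (1 : Fin 3) < 2 by decide)
      have x02 := hx (show (0 : Fin 3) < 2 by decide)
      have y01 := hy (show (0 : Fin 3) < 1 by decide)
      have y12 := hy (show (1 : Fin 3) < 2 by decide)
      have y02 := hy (show (0 : Fin 3) < 2 by decide)
      have m1 := tn_two hK x01 y01
      have m2 := tn_two hK x01 y12
      have m3 := tn_two hK x01 y02
      have m4 := tn_two hK x12 y01
      have m5 := tn_two hK x12 y12
      have m6 := tn_two hK x12 y02
      have m7 := tn_two hK x02 y01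
      have m8 := tn_two hK x02 y12
      have m9 := tn_two hK x02 y02
      have na := hn (x 0) (y 0)
      have nb := hn (x 0) (y 1)
      have nc := hn (x 0) (y 2)
      have nd := hn (x 1) (y 0)
      have ne := hn (x 1) (y 1)
      have nf := hn (x 1) (y 2)
      have ng := hn (x 2) (y 0)
      have nh := hn (x 2) (y 1)
      have ni := hn (x 2) (y 2)
      generalize K (x 0) (y 0) = a at *
      generalize K (x 0) (y 1) = b at *
      generalize K (x 0) (y 2) = c at *
      generalize K (x 1) (y 0) = d at *
      generalize K (x 1) (y 1) = e at *
      generalize K (x 1) (y 2) = f at *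
      generalize K (x 2) (y 0) = g at *
      generalize K (x 2) (y 1) = h at *
      generalize K (x 2) (y 2) = i at *
      have key := six_lemma (α := α) (p1 := a * e * i) (p2 := b * f * g) (p3 := c * d * h)
        (n1 := c * e * g) (n2 := b * d * i) (n3 := a * f * h) hα (by positivity)
        (by nlinarith [mul_le_mul_of_nonneg_left m2 ng]) (by nlinarith [mul_le_mul_of_nonneg_left m4 nc])
        (by nlinarith [mul_le_mul_of_nonneg_left m6 nb]) (by nlinarith [mul_le_mul_of_nonneg_left m7 nf])
        (by nlinarith [mul_le_mul_of_nonneg_left m8 nd]) (by nlinarith [mul_le_mul_of_nonneg_left m3 nh])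
        (by nlinarith [mul_le_mul_of_nonneg_left m1 ni]) (by nlinarith [mul_le_mul_of_nonneg_left m5 na])
        (by ring) (by linarith)
      have e3 : ∀ u v w : ℝ, 0 ≤ u → 0 ≤ v → 0 ≤ w → (u * v * w) ^ α = u ^ α * v ^ α * w ^ α := by
        intro u v w hu hv hw
        rw [Real.mul_rpow (mul_nonneg hu hv) hw, Real.mul_rpow hu hv]
      rw [e3 _ _ _ na ne ni, e3 _ _ _ nb nf ng, e3 _ _ _ nc nd nh, e3 _ _ _ nc ne ng, e3 _ _ _ nb nd ni,
        e3 _ _ _ na nf nh] at key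
      linarith
    · exact h4 n (by omega) x y hx hy

theorem psd_of_tn {A : Matrix (Fin 4) (Fin 4) ℝ} (hs : ∀ i j, A i j = A j i)
    (h : IsTNKernel fun i j => A i j) : A.PosSemidef := by
  apply psd_of_minors A hs
  · intro i; exact tn_nonneg h i i
  · intro i j hij
    exact h 2 _ _ (strictMono_two hij) (strictMono_two hij)
  · intro i j k hij hjk
    exact h 3 _ _ (strictMono_three hij hjk) (strictMono_three hij hjk)
  · exact h 4 _ _ strictMono_id strictMono_id

theorem pres_three_pow {α : ℝ} (hα : 1 ≤ α) : Pres (Fin 3) fun x => x ^ α := by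
  intro K _ hK
  apply tn_pow_three hK hα
  intro n hn x y hx hy
  have := fin_le hx
  omega

theorem pres_four_pow {α : ℝ} (hα : 2 ≤ α) : Pres (Fin 4) fun x => x ^ α := by
  intro K hs hK
  apply tn_pow_three hK (by linarith)
  intro n hn x y hx hy
  have := fin_le hx
  obtain rfl : n = 4 := by omega
  rw [fin_id hx, fin_id hy]
  have hpsd := psd_of_tn (A := Matrix.of K) hs hK
  exact (fitz_horn 2 _ hpsd (tn_nonneg hK) α (by simpa using hα)).det_nonneg


theorem nec_one {F : ℝ → ℝ} (h : Pres (Fin 1) F) (x : ℝ) (hx : 0 ≤ x) : 0 ≤ F x :=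
  tn_nonneg (h (fun _ _ => x) (fun _ _ => rfl) (tn_const x hx)) 0 0

theorem pres_le {m n : ℕ} (hmn : m ≤ n) {F : ℝ → ℝ} (h : Pres (Fin n) F) : Pres (Fin m) F :=
  pres_embed (Fin.castLE hmn) (Fin.strictMono_castLE hmn) F h

theorem nec_two {F : ℝ → ℝ} (h : Pres (Fin 2) F) : (∀ x : ℝ, 0 ≤ x → 0 ≤ F x) ∧ MonotoneOn F (Set.Ici 0) ∧
    ∀ x y : ℝ, 0 ≤ x → 0 ≤ y → F (Real.sqrt (x * y)) ^ 2 ≤ F x * F y := by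
  have h0 := nec_one (pres_le (by norm_num) h)
  have key : ∀ a b c : ℝ, 0 ≤ a → 0 ≤ b → 0 ≤ c → b ^ 2 ≤ a * c → F b * F b ≤ F a * F c := by
    intro a b c ha hb hc hbc
    have h1 := h (fun i j => !![a, b; b, c] i j) (by
      intro i j; fin_cases i <;> fin_cases j <;> simp) (by
      apply two_of
      · simp
      · intro i j; fin_cases i <;> fin_cases j <;> simpa
      · simpa using hbc)
    have h2 := tn_two h1 (a := 0) (a' := 1) (b := 0) (b' := 1) (by decide) (by decide)
    simpa using h2
  refine ⟨h0, ?_, ?_⟩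
  · intro x hx y hy hxy
    have hx' : (0:ℝ) ≤ x := hx
    have hy' : (0:ℝ) ≤ y := hy
    have := key y x y hy hx hy (by nlinarith)
    exact abs_le_of_sq_le_sq' (by nlinarith) (h0 y hy) |>.2
  · intro x y hx hy
    have := key x (Real.sqrt (x * y)) y hx (Real.sqrt_nonneg _) hy (by rw [Real.sq_sqrt (by positivity)])
    nlinarith

theorem tn_rank_one {X : Type*} [LinearOrder X] (u : X → ℝ) (hu : ∀ i, 0 ≤ u i) :
    IsTNKernel fun i j => u i * u j := by
  have := tn_gram u (fun _ => 0) (fun _ => 0) hu (by simp) (by simp) (by simp) (by simp) (by simp) (by simp)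
  simpa using this

theorem add_mono_lin (g : ℝ → ℝ) (ha : ∀ x y, g (x + y) = g x + g y) (hm : Monotone g) (x : ℝ) :
    g x = x * g 1 := by
  let G : ℝ →+ ℝ := AddMonoidHom.mk' g ha
  have hc : Continuous G := MeasureTheory.Measure.AddMonoidHom.continuous_of_measurable G hm.measurable
  have := map_real_smul G hc x 1
  simpa [G] using this

theorem nec_three {F : ℝ → ℝ} (h : Pres (Fin 3) F) : (∃ c : ℝ, 0 ≤ c ∧ ∀ x : ℝ, 0 ≤ x → F x = c) ∨
    (∃ c : ℝ, 0 < c ∧ ∃ α : ℝ, 1 ≤ α ∧ ∀ x : ℝ, 0 ≤ x → F x = c * x ^ α) := by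
  obtain ⟨h0, hm, -⟩ := nec_two (pres_le (by norm_num) h)
  have hu : ∀ p q r : ℝ, 0 ≤ p → 0 ≤ q → 0 ≤ r → F (p * r) * F (p * q) ≤ F (p * p) * F (q * r) ∧
      F (p * r) * F (q * q) ≤ F (p * q) * F (q * r) := by
    intro p q r hp hq hr
    have h1 := h (fun i j => ![p, q, r] i * ![p, q, r] j) (fun _ _ => mul_comm _ _)
      (tn_rank_one ![p, q, r] (by intro i; fin_cases i <;> simpa))
    have e1 := tn_two h1 (a := 0) (a' := 1) (b := 0) (b' := 2) (by decide) (by decide)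
    have e2 := tn_two h1 (a := 0) (a' := 1) (b := 1) (b' := 2) (by decide) (by decide)
    simp at e1 e2
    rw [mul_comm q p] at e1
    exact ⟨e1, e2⟩
  have hmul : ∀ p r : ℝ, 0 ≤ p → 0 ≤ r → F 1 * F (p * r) = F p * F r := by
    intro p r hp hr
    have e1 := (hu 1 p r zero_le_one hp hr).1
    have e2 := (hu p 1 r hp zero_le_one hr).2
    simp at e1 e2
    linarith
  rcases eq_or_lt_of_le (h0 1 zero_le_one) with h1 | h1
  · left
    refine ⟨0, le_rfl, fun x hx => ?_⟩
    have := hmul x x hx hx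
    rw [← h1, zero_mul] at this
    exact mul_self_eq_zero.1 this.symm
  rcases eq_or_lt_of_le (h0 0 le_rfl) with hz | hz
  swap
  · left
    refine ⟨F 1, h1.le, fun x hx => ?_⟩
    have := hmul 0 x le_rfl hx
    rw [zero_mul] at this
    have : F 0 * (F x - F 1) = 0 := by linarith
    rcases mul_eq_zero.1 this with h | h <;> linarith
  right
  have hpos : ∀ x : ℝ, 0 < x → 0 < F x := by
    intro x hx
    have := hmul x x⁻¹ hx.le (by positivity)
    rw [mul_inv_cancel₀ hx.ne'] at this
    rcases eq_or_lt_of_le (h0 x hx.le) with h | h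
    · rw [← h] at this; nlinarith
    · exact h
  let g : ℝ → ℝ := fun t => Real.log (F (Real.exp t) / F 1)
  have hg : ∀ t, F (Real.exp t) = F 1 * Real.exp (g t) := by
    intro t
    simp only [g]
    rw [Real.exp_log (div_pos (hpos _ (Real.exp_pos t)) h1)]
    field_simp
  have ha : ∀ x y, g (x + y) = g x + g y := by
    intro x y
    apply Real.exp_injective
    have := hmul (Real.exp x) (Real.exp y) (Real.exp_pos x).le (Real.exp_pos y).le
    rw [← Real.exp_add, hg, hg, hg] at this
    rw [Real.exp_add]
    have h2 : F 1 * F 1 ≠ 0 := by positivity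
    apply mul_left_cancel₀ h2
    linarith
  have hgm : Monotone g := by
    intro x y hxy
    apply Real.log_le_log (div_pos (hpos _ (Real.exp_pos x)) h1)
    have := hm (Real.exp_pos x).le (Real.exp_pos y).le (Real.exp_le_exp.2 hxy)
    gcongr
  have hlin := add_mono_lin g ha hgm
  have hF : ∀ x, 0 < x → F x = F 1 * x ^ g 1 := by
    intro x hx
    have := hg (Real.log x)
    rw [Real.exp_log hx] at this
    rw [this, hlin, Real.rpow_def_of_pos hx]
  have hα : 1 ≤ g 1 := by
    have hk := tn_gram (![1, 1, 0] : Fin 3 → ℝ) ![0, 1, 1] (fun _ => 0)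
      (by intro i; fin_cases i <;> simp) (by intro i; fin_cases i <;> simp) (by simp)
      (by intro i j hij; fin_cases i <;> fin_cases j <;> simp at hij ⊢) (by simp) (by simp) (by simp)
    have := h _ (by intro a b; ring) hk 3 id id strictMono_id strictMono_id
    rw [Matrix.det_fin_three] at this
    simp at this
    norm_num at this
    rw [← hz, hF 2 (by norm_num)] at this
    have h3 : 0 ≤ F 1 ^ 3 * ((2:ℝ) ^ g 1 - 2) := by nlinarith
    have h4 : (2:ℝ) ^ (1:ℝ) ≤ (2:ℝ) ^ g 1 := by
      have := nonneg_of_mul_nonneg_right h3 (by positivity)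
      rw [Real.rpow_one]; linarith
    exact (Real.rpow_le_rpow_left_iff (by norm_num)).1 h4
  refine ⟨F 1, h1, g 1, hα, fun x hx => ?_⟩
  rcases eq_or_lt_of_le hx with rfl | hx
  · rw [Real.zero_rpow (by linarith), mul_zero, ← hz]
  · exact hF x hx

theorem nec_four {F : ℝ → ℝ} (h : Pres (Fin 4) F) : (∃ c : ℝ, 0 ≤ c ∧ ∀ x : ℝ, 0 ≤ x → F x = c) ∨
    (∃ c : ℝ, 0 < c ∧ ∃ α : ℝ, (α = 1 ∨ 2 ≤ α) ∧ ∀ x : ℝ, 0 ≤ x → F x = c * x ^ α) := by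
  rcases nec_three (pres_le (by norm_num) h) with h' | ⟨c, hc, α, hα, hF⟩
  · exact Or.inl h'
  right
  refine ⟨c, hc, α, ?_, hF⟩
  by_contra! hcon
  have hα1 : 1 < α := lt_of_le_of_ne hα (Ne.symm hcon.1)
  obtain ⟨e, hq, he⟩ := ((quad_neg4 α hα1 hcon.2).and self_mem_nhdsWithin).exists
  have he' : 0 < e := he
  have hse : Real.sqrt e * Real.sqrt e = e := Real.mul_self_sqrt he'.le
  have hk := tn_gram (fun _ : Fin 4 => (1:ℝ)) (fun i => Real.sqrt e * ((i:ℕ):ℝ)) (fun _ => 0)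
    (by simp) (by intro i; positivity) (by simp)
    (by
      intro i j hij
      have : ((i:ℕ):ℝ) ≤ ((j:ℕ):ℝ) := by exact_mod_cast hij.le
      have := mul_le_mul_of_nonneg_left this (Real.sqrt_nonneg e)
      linarith) (by simp) (by simp) (by simp)
  have hk1 : (fun i j : Fin 4 => (1:ℝ) * 1 + Real.sqrt e * ((i:ℕ):ℝ) * (Real.sqrt e * ((j:ℕ):ℝ)) + 0 * 0)
      = fun i j : Fin 4 => 1 + (((i:ℕ):ℝ) * ((j:ℕ):ℝ)) * e := by
    ext i j
    linear_combination (((i:ℕ):ℝ) * ((j:ℕ):ℝ)) * hse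
  rw [hk1] at hk
  have ht := h _ (by intro a b; ring) hk
  have ht1 : (fun i j : Fin 4 => F (1 + (((i:ℕ):ℝ) * ((j:ℕ):ℝ)) * e)) =
      fun i j : Fin 4 => (Matrix.of fun i j : Fin 4 => c * (1 + (((i:ℕ):ℝ) * ((j:ℕ):ℝ)) * e) ^ α) i j := by
    ext i j
    rw [hF _ (by positivity)]; rfl
  rw [ht1] at ht
  have hp := ((psd_iff_aux _).1 (psd_of_tn (by intro i j; simp [mul_comm ((i:ℕ):ℝ)]) ht)).2 ![1,-3,3,-1]
  have hs : ∑ i : Fin 4, ∑ j : Fin 4, (![1,-3,3,-1] : Fin 4 → ℝ) i * ((Matrix.of fun i j : Fin 4 => c * (1 + (((i:ℕ):ℝ) * ((j:ℕ):ℝ)) * e) ^ α) i j * (![1,-3,3,-1] : Fin 4 → ℝ) j)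
    = c * ∑ i : Fin 4, ∑ j : Fin 4, (![1,-3,3,-1] : Fin 4 → ℝ) i * ((1 + (((i:ℕ):ℝ) * ((j:ℕ):ℝ)) * e)^α * (![1,-3,3,-1] : Fin 4 → ℝ) j) := by
    simp only [Finset.mul_sum, Matrix.of_apply]
    refine Finset.sum_congr rfl fun i _ => Finset.sum_congr rfl fun j _ => by ring
  rw [hs] at hp
  have := mul_neg_of_pos_of_neg hc hq
  linarith

theorem nec_five {F : ℝ → ℝ} (h : Pres (Fin 5) F) : (∃ c : ℝ, 0 ≤ c ∧ ∀ x : ℝ, 0 ≤ x → F x = c) ∨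
    (∃ c : ℝ, 0 < c ∧ ∀ x : ℝ, 0 ≤ x → F x = c * x) := by
  rcases nec_three (pres_le (by norm_num) h) with h' | ⟨c, hc, α, hα, hF⟩
  · exact Or.inl h'
  right
  refine ⟨c, hc, ?_⟩
  rcases eq_or_lt_of_le hα with rfl | hα1
  · simpa using hF
  exfalso
  obtain ⟨e, hq, he⟩ := ((det_neg5 α hα1).and self_mem_nhdsWithin).exists
  have he' : 0 < e := he
  have hse : Real.sqrt e * Real.sqrt e = e := Real.mul_self_sqrt he'.le
  have hs0 := Real.sqrt_nonneg e
  have hk := tn_gram (fun _ : Fin 5 => (1:ℝ)) (fun i => Real.sqrt e * (![0,1,2,3,4] : Fin 5 → ℝ) i)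
    (fun i => Real.sqrt e * (![0,0,0,1,2] : Fin 5 → ℝ) i)
    (by simp) (by intro i; apply mul_nonneg hs0; fin_cases i <;> simp)
    (by intro i; apply mul_nonneg hs0; fin_cases i <;> simp)
    (by
      intro i j hij
      have : (![0,1,2,3,4] : Fin 5 → ℝ) i ≤ (![0,1,2,3,4] : Fin 5 → ℝ) j := by
        fin_cases i <;> fin_cases j <;> simp at hij ⊢ <;> norm_num
      have := mul_le_mul_of_nonneg_left this hs0
      linarith)
    (by
      intro i j hij
      have : (![0,0,0,1,2] : Fin 5 → ℝ) i ≤ (![0,0,0,1,2] : Fin 5 → ℝ) j := by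
        fin_cases i <;> fin_cases j <;> simp at hij ⊢
      have := mul_le_mul_of_nonneg_left this hs0
      linarith)
    (by
      intro i j hij
      have : (![0,1,2,3,4] : Fin 5 → ℝ) j * (![0,0,0,1,2] : Fin 5 → ℝ) i
          ≤ (![0,1,2,3,4] : Fin 5 → ℝ) i * (![0,0,0,1,2] : Fin 5 → ℝ) j := by
        fin_cases i <;> fin_cases j <;> simp at hij ⊢ <;> norm_num
      have := mul_le_mul_of_nonneg_left this he'.le
      nlinarith)
    (by
      intro i j k hij hjk
      have : 0 ≤ ((![0,1,2,3,4] : Fin 5 → ℝ) j * (![0,0,0,1,2] : Fin 5 → ℝ) k - (![0,1,2,3,4] : Fin 5 → ℝ) k * (![0,0,0,1,2] : Fin 5 → ℝ) j)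
         - ((![0,1,2,3,4] : Fin 5 → ℝ) i * (![0,0,0,1,2] : Fin 5 → ℝ) k - (![0,1,2,3,4] : Fin 5 → ℝ) k * (![0,0,0,1,2] : Fin 5 → ℝ) i)
         + ((![0,1,2,3,4] : Fin 5 → ℝ) i * (![0,0,0,1,2] : Fin 5 → ℝ) j - (![0,1,2,3,4] : Fin 5 → ℝ) j * (![0,0,0,1,2] : Fin 5 → ℝ) i) := by
        fin_cases i <;> fin_cases j <;> (first | (exfalso; revert hij; decide) | skip) <;>
          fin_cases k <;> (first | (exfalso; revert hjk; decide) | skip) <;> simp <;> norm_num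
      have := mul_nonneg he'.le this
      rw [← hse] at this
      linarith)
  have hk1 : (fun i j : Fin 5 => (1:ℝ) * 1 + Real.sqrt e * (![0,1,2,3,4] : Fin 5 → ℝ) i * (Real.sqrt e * (![0,1,2,3,4] : Fin 5 → ℝ) j)
       + Real.sqrt e * (![0,0,0,1,2] : Fin 5 → ℝ) i * (Real.sqrt e * (![0,0,0,1,2] : Fin 5 → ℝ) j))
      = fun i j : Fin 5 => 1 + ((![0,1,2,3,4] : Fin 5 → ℝ) i * (![0,1,2,3,4] : Fin 5 → ℝ) j +
        (![0,0,0,1,2] : Fin 5 → ℝ) i * (![0,0,0,1,2] : Fin 5 → ℝ) j) * e := by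
    ext i j
    linear_combination ((![0,1,2,3,4] : Fin 5 → ℝ) i * (![0,1,2,3,4] : Fin 5 → ℝ) j +
        (![0,0,0,1,2] : Fin 5 → ℝ) i * (![0,0,0,1,2] : Fin 5 → ℝ) j) * hse
  rw [hk1] at hk
  have ht := h _ (by intro a b; ring) hk 4 ![0,1,2,3] ![0,2,3,4] (by decide) (by decide)
  have hFt : ∀ t : ℝ, 0 ≤ t → F (1 + t * e) = c * (1 + t * e) ^ α := fun t ht => hF _ (by positivity)
  have h00 : F 1 = c := by simpa using hF 1 zero_le_one
  have hq' := hq (fun t => (1 + t * e) ^ α) (fun _ => rfl)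
  rw [det_four] at ht
  simp only [Matrix.det_fin_three, Matrix.submatrix_apply, Matrix.of_apply] at ht
  simp [h00] at ht
  norm_num [hFt] at ht
  have := mul_neg_of_pos_of_neg (pow_pos hc 4) hq'
  nlinarith

theorem suff_all {F : ℝ → ℝ} {d : ℕ} (h : SymmTNCond F d) : Pres (Fin d) F := by
  rcases h with ⟨c, hc, h⟩ | ⟨rfl, h⟩ | ⟨rfl, h1, h2, h3⟩ | ⟨rfl, c, hc, α, hα, h⟩ | ⟨rfl, c, hc, α, hα, h⟩ | ⟨_, c, hc, h⟩
  · exact pres_const hc h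
  · intro K _ hK
    apply tn_of_dets
    · intro a b; exact h _ (tn_nonneg hK a b)
    · intro a a' b b' ha; omega
    · intro n hn x y hx
      have := fin_le hx
      omega
  · exact pres_two h1 h2 h3
  · exact pres_pow hc.le h (pres_three_pow hα)
  · rcases hα with rfl | hα
    · exact pres_lin hc.le (by simpa using h)
    · exact pres_pow hc.le h (pres_four_pow hα)
  · exact pres_lin hc.le h

theorem nec_all {F : ℝ → ℝ} {d : ℕ} (hd : 0 < d) (h : Pres (Fin d) F) : SymmTNCond F d := by
  unfold SymmTNCond
  obtain rfl | rfl | rfl | rfl | h5 : d = 1 ∨ d = 2 ∨ d = 3 ∨ d = 4 ∨ 5 ≤ d := by omega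
  · have := nec_one h; tauto
  · have := nec_two h; tauto
  · rcases nec_three h with h | h
    · exact Or.inl h
    · exact Or.inr (Or.inr (Or.inr (Or.inl ⟨rfl, h⟩)))
  · rcases nec_four h with h | h
    · exact Or.inl h
    · exact Or.inr (Or.inr (Or.inr (Or.inr (Or.inl ⟨rfl, h⟩))))
  · rcases nec_five (pres_le h5 h) with h | h
    · exact Or.inl h
    · exact Or.inr (Or.inr (Or.inr (Or.inr (Or.inr ⟨h5, h⟩))))

theorem stmt_1 (F : ℝ → ℝ) (d : ℕ) (hd : 0 < d) :
    ((∀ A : Matrix (Fin d) (Fin d) ℝ, A.IsSymm → IsTNMat A → IsTNMat (A.map F)) ↔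
      SymmTNCond F d) ∧
    (∀ (X : Type) [LinearOrder X], Nat.card X = d →
      ((∀ K : X → X → ℝ, (∀ a b, K a b = K b a) → IsTNKernel K →
          IsTNKernel fun a b => F (K a b)) ↔ SymmTNCond F d)) ∧
    (∀ (X : Type) [LinearOrder X], Infinite X →
      ((∀ K : X → X → ℝ, (∀ a b, K a b = K b a) → IsTNKernel K →
          IsTNKernel fun a b => F (K a b)) ↔
        ((∃ c : ℝ, 0 ≤ c ∧ ∀ x : ℝ, 0 ≤ x → F x = c) ∨
         (∃ c : ℝ, 0 < c ∧ ∀ x : ℝ, 0 ≤ x → F x = c * x)))) := by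
  refine ⟨?_, ?_, ?_⟩
  · rw [pres_mat_iff]
    exact ⟨nec_all hd, suff_all⟩
  · intro X _ hX
    have : Finite X := Nat.finite_of_card_ne_zero (by omega)
    have := Fintype.ofFinite X
    rw [Nat.card_eq_fintype_card] at hX
    let e := monoEquivOfFin X hX
    exact ⟨fun h => nec_all hd (pres_embed e e.strictMono F h),
      fun h => pres_embed e.symm e.symm.strictMono F (suff_all h)⟩
  · intro X _ hX
    constructor
    · intro h
      obtain ⟨s, hs⟩ := Infinite.exists_subset_card_eq X 5
      exact nec_five (pres_embed (s.orderEmbOfFin hs) (s.orderEmbOfFin hs).strictMono F h)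
    · rintro (⟨c, hc, h⟩ | ⟨c, hc, h⟩)
      · exact pres_const hc h
      · exact pres_lin hc.le h
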